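/- arXiv:1406.2112 — 4 statements merged into one kernel-verified Lean document; each statement's English description precedes it below -/
import Mathlib

section
/- Let g and f be probability mass functions on ℕ with f(x) > 0 whenever g(x) > 0, and suppose there is δ > 0 such that Σ_x g(x) (g(x)/f(x))^δ < ∞ and Σ_x g(x) (g(x)/f(x))^{−δ} < ∞. Then lim_{γ→0} LPD_γ(g,f) = LD(g,f) = Σ_x g(x) log(g(x)/f(x)). -/
/-!
With `L x = log (g x / f x)`, the sum inside the logarithm is the moment generating function
`M γ = ∑ₓ g x * exp (γ * L x)` for `γ ≠ -1`. By dominated convergence, `M` has derivative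
`∑ₓ g x * L x` at `0`: for `|γ| ≤ δ/2` the difference quotients are dominated by
`g x * |L x| * exp (δ/2 * |L x|) ≤ (2/δ) * g x * (exp (δ * L x) + exp (-δ * L x))`, which is
summable by the two moment hypotheses. Since `M 0 = 1`, the function `log ∘ M` vanishes at `0` and
has the same derivative there, so `log (M γ) / γ` tends to `∑ₓ g x * L x`; the remaining factor
`1 / (γ + 1)` tends to `1`.
-/

open MeasureTheory Filter Real Topology

lemma abs_exp_sub_one_le_mul_exp (y : ℝ) : |Real.exp y - 1| ≤ |y| * Real.exp |y| := by
  rcases le_total 0 y with hy | hy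
  · have h1 : 1 ≤ Real.exp y := Real.one_le_exp hy
    rw [abs_of_nonneg (by linarith), abs_of_nonneg hy]
    have h2 := Real.add_one_le_exp (-y)
    have h3 : Real.exp (-y) * Real.exp y = 1 := by rw [← Real.exp_add]; simp
    nlinarith [Real.exp_pos y]
  · have h1 : Real.exp y ≤ 1 := Real.exp_le_one_iff.mpr hy
    rw [abs_of_nonpos (by linarith), abs_of_nonpos hy]
    have h2 := Real.add_one_le_exp y
    have h3 : 1 ≤ Real.exp (-y) := Real.one_le_exp (by linarith)
    nlinarith

/-- The dominating bound for the difference quotients of `γ ↦ exp (γ * l)` at `0`. -/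
lemma abs_exp_quotient_le {δ γ l : ℝ} (hδ : 0 < δ) (hγ0 : γ ≠ 0) (hγ : |γ| ≤ δ / 2) :
    |γ⁻¹ * (Real.exp (γ * l) - 1)| ≤ 2 / δ * (Real.exp (l * δ) + Real.exp (l * -δ)) := by
  have hγp : 0 < |γ| := abs_pos.mpr hγ0
  have hl := abs_nonneg l
  calc |γ⁻¹ * (Real.exp (γ * l) - 1)|
      ≤ |γ|⁻¹ * (|γ * l| * Real.exp |γ * l|) := by
        rw [abs_mul, abs_inv]
        gcongr
        exact abs_exp_sub_one_le_mul_exp _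
    _ = |l| * Real.exp (|γ| * |l|) := by
        rw [abs_mul]; field_simp
    _ ≤ |l| * Real.exp (δ / 2 * |l|) := by gcongr
    _ ≤ (2 / δ * Real.exp (δ / 2 * |l|)) * Real.exp (δ / 2 * |l|) := by
        gcongr
        -- `t ≤ exp t` at `t = δ/2 * |l|`
        have := Real.add_one_le_exp (δ / 2 * |l|)
        calc |l| = 2 / δ * (δ / 2 * |l|) := by field_simp
          _ ≤ _ := by gcongr; linarith
    _ = 2 / δ * Real.exp (δ * |l|) := by
        rw [mul_assoc, ← Real.exp_add]; ring_nf
    _ ≤ _ := by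
        gcongr
        rcases abs_cases l with ⟨h, _⟩ | ⟨h, _⟩ <;> rw [h]
        · rw [mul_comm]; linarith [Real.exp_pos (l * -δ)]
        · rw [show δ * -l = l * -δ by ring]; linarith [Real.exp_pos (l * δ)]

/-- **`LPD_γ → LD` as `γ → 0`.**
Let `g, f` be pmfs on `ℕ` with `f x > 0` whenever `g x > 0`, and suppose for some
`δ > 0` both `∑ₓ g(x)(g(x)/f(x))^δ` and `∑ₓ g(x)(g(x)/f(x))^{−δ}` are finite.
Then `LPD_γ(g,f) = (1/(γ(γ+1))) log ∑ₓ g(x)^{1+γ} f(x)^{−γ}` tends, as `γ → 0`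
(through values `γ ∉ {0, −1}`), to the likelihood disparity
`LD(g,f) = ∑ₓ g(x) log(g(x)/f(x))`. -/
theorem lpd_tendsto_ld
    (g f : ℕ → ℝ) (hg0 : ∀ x, 0 ≤ g x) (hf0 : ∀ x, 0 ≤ f x)
    (hg1 : HasSum g 1) (hf1 : HasSum f 1)
    (hsupp : ∀ x, g x ≠ 0 → 0 < f x)
    (δ : ℝ) (hδ : 0 < δ)
    (h1 : Summable fun x => g x * (g x / f x) ^ δ)
    (h2 : Summable fun x => g x * (g x / f x) ^ (-δ)) :
    Tendsto (fun γ : ℝ =>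
        (1 / (γ * (γ + 1))) * Real.log (∑' x, g x ^ (1 + γ) * f x ^ (-γ)))
      (𝓝[≠] (0:ℝ)) (𝓝 (∑' x, g x * Real.log (g x / f x))) := by
  set L : ℕ → ℝ := fun x => Real.log (g x / f x) with hL
  have hpow : ∀ (x : ℕ) (t : ℝ), g x * (g x / f x) ^ t = g x * Real.exp (L x * t) := by
    intro x t
    by_cases hx : g x = 0
    · simp [hx]
    · have hr : 0 < g x / f x := div_pos ((hg0 x).lt_of_ne' hx) (hsupp x hx)
      rw [Real.rpow_def_of_pos hr]
  simp only [hpow] at h1 h2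
  set M : ℝ → ℝ := fun γ => ∑' x, g x * Real.exp (γ * L x) with hM
  set B : ℕ → ℝ := fun x =>
    2 / δ * (g x * Real.exp (L x * δ) + g x * Real.exp (L x * -δ)) with hB
  have hBs : Summable B := (h1.add h2).mul_left _
  have hM0 : M 0 = 1 := by simp [hM, hg1.tsum_eq]
  have hsmall : ∀ᶠ γ : ℝ in 𝓝[≠] 0, γ ≠ 0 ∧ |γ| ≤ δ / 2 := by
    refine (eventually_mem_nhdsWithin).and (eventually_nhdsWithin_of_eventually_nhds ?_)
    filter_upwards [Metric.closedBall_mem_nhds (0 : ℝ) (half_pos hδ)] with γ hγ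
    simpa using hγ
  have hbound : ∀ γ : ℝ, γ ≠ 0 → |γ| ≤ δ / 2 → ∀ x,
      ‖g x * (γ⁻¹ * (Real.exp (γ * L x) - 1))‖ ≤ B x := by
    intro γ h0 hγ x
    rw [norm_mul, Real.norm_of_nonneg (hg0 x), Real.norm_eq_abs]
    have := mul_le_mul_of_nonneg_left (abs_exp_quotient_le (l := L x) hδ h0 hγ) (hg0 x)
    calc _ ≤ _ := this
      _ = B x := by simp only [hB]; ring
  have hderivM : HasDerivAt M (∑' x, g x * L x) 0 := by
    rw [hasDerivAt_iff_tendsto_slope_zero]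
    have hlim : Tendsto (fun γ : ℝ => ∑' x, g x * (γ⁻¹ * (Real.exp (γ * L x) - 1)))
        (𝓝[≠] 0) (𝓝 (∑' x, g x * L x)) := by
      refine tendsto_tsum_of_dominated_convergence hBs (fun x => ?_) ?_
      · have hd : HasDerivAt (fun γ : ℝ => Real.exp (γ * L x)) (L x) 0 := by
          simpa using ((hasDerivAt_id (0 : ℝ)).mul_const (L x)).exp
        have := hasDerivAt_iff_tendsto_slope_zero.mp hd
        simpa using this.const_mul (g x)
      · filter_upwards [hsmall] with γ hγ x using hbound γ hγ.1 hγ.2 x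
    refine hlim.congr' ?_
    filter_upwards [hsmall] with γ ⟨h0, hγ⟩
    have hs : Summable fun x => g x * (γ⁻¹ * (Real.exp (γ * L x) - 1)) :=
      Summable.of_norm_bounded hBs (hbound γ h0 hγ)
    -- summability of the series `M γ` follows from that of its difference quotient
    have hsum := (hs.hasSum.mul_left γ).add hg1
    have hMγ : M γ = γ * (∑' x, g x * (γ⁻¹ * (Real.exp (γ * L x) - 1))) + 1 := by
      rw [← hsum.tsum_eq]
      refine tsum_congr fun x => ?_
      field_simp
      ring
    rw [zero_add, hM0, hMγ, smul_eq_mul]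
    field_simp
    ring
  have hlog : Tendsto (fun γ : ℝ => γ⁻¹ * Real.log (M γ)) (𝓝[≠] 0)
      (𝓝 (∑' x, g x * L x)) := by
    have hd := hderivM.log (by rw [hM0]; exact one_ne_zero)
    simpa [hM0] using hasDerivAt_iff_tendsto_slope_zero.mp hd
  have hfac : Tendsto (fun γ : ℝ => (γ + 1)⁻¹) (𝓝[≠] 0) (𝓝 1) := by
    have : ContinuousAt (fun γ : ℝ => (γ + 1)⁻¹) 0 :=
      (continuousAt_id.add continuousAt_const).inv₀ (by simp)
    simpa using this.tendsto.mono_left nhdsWithin_le_nhds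
  have hprod := hfac.mul hlog
  rw [one_mul] at hprod
  refine hprod.congr' ?_
  have hne : ∀ᶠ γ : ℝ in 𝓝[≠] 0, 1 + γ ≠ 0 := by
    refine eventually_nhdsWithin_of_eventually_nhds ?_
    exact (continuousAt_const.add continuousAt_id).eventually_ne (by simp)
  filter_upwards [hne] with γ hγ
  have hsumeq : ∑' x, g x ^ (1 + γ) * f x ^ (-γ) = M γ := by
    refine tsum_congr fun x => ?_
    by_cases hx : g x = 0
    · -- `0 ^ (1 + γ) = 0` requires `γ ≠ -1`
      simp [hx, Real.zero_rpow hγ]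
    · have hgx : 0 < g x := (hg0 x).lt_of_ne' hx
      have hfx := hsupp x hx
      rw [mul_comm γ, ← hpow, Real.rpow_add hgx, Real.rpow_one, Real.rpow_neg hfx.le,
        Real.div_rpow hgx.le hfx.le, div_eq_mul_inv, mul_assoc]
  rw [hsumeq, one_div, mul_inv]
  ring
end

section
/- Let g and f be probability mass functions on ℕ with g(x) > 0 whenever f(x) > 0, and suppose there is δ > 0 such that Σ_x f(x) (f(x)/g(x))^δ < ∞ and Σ_x f(x) (f(x)/g(x))^{−δ} < ∞. Then lim_{γ→−1} LPD_γ(g,f) = KLD(g,f) = Σ_x f(x) log(f(x)/g(x)). -/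
/-!
Put `L x = log (f x / g x)` and `M s = ∑ f x * exp (s * L x)`. On the support of `f` one has
`g ^ (1 + γ) * f ^ (-γ) = f * exp (s * L)` with `s = -(1 + γ)`, and off it both sides vanish for
`γ ≠ 0`, so `LPD_γ = (-γ)⁻¹ * (log (M s) / s)`. The two moment conditions allow termwise
differentiation of `M` near `0`, so `log ∘ M` vanishes at `0` and has derivative
`∑ f x * L x = KLD` there; this is the limit of `log (M s) / s` as `s → 0`.
-/

open MeasureTheory Filter Real Topology

/-- Exponential moments of `L` at `δ` and `-δ` allow differentiating its moment generating function
termwise at `0`: for `|s| < δ / 2` the derivative of each term is dominated by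
`(2 / δ) * f * (exp (δ * L) + exp (-δ * L))`. -/
theorem hasDerivAt_tsum_mul_exp_zero (f L : ℕ → ℝ) (hf0 : ∀ x, 0 ≤ f x) (hf : Summable f)
    (δ : ℝ) (hδ : 0 < δ)
    (h1 : Summable fun x => f x * exp (δ * L x))
    (h2 : Summable fun x => f x * exp (-δ * L x)) :
    HasDerivAt (fun s : ℝ => ∑' x, f x * exp (s * L x)) (∑' x, f x * L x) 0 := by
  have key := hasDerivAt_tsum_of_isPreconnected
    (g := fun x (s : ℝ) => f x * exp (s * L x))
    (g' := fun x (s : ℝ) => f x * (exp (s * L x) * L x))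
    (u := fun x => (2 / δ) * (f x * exp (δ * L x) + f x * exp (-δ * L x)))
    (t := Metric.ball (0 : ℝ) (δ / 2)) (y₀ := 0) (y := 0)
    ((h1.add h2).mul_left _) Metric.isOpen_ball
    (convex_ball (0 : ℝ) (δ / 2)).isPreconnected ?_ ?_
    (Metric.mem_ball_self (by positivity)) (by simpa using hf)
    (Metric.mem_ball_self (by positivity))
  · simpa using key
  · intro x s _
    simpa using (((hasDerivAt_id s).mul_const (L x)).exp.const_mul (f x))
  · intro x s hs
    have hs' : |s| < δ / 2 := by simpa using hs
    have e1 : exp (s * L x) ≤ exp (δ / 2 * |L x|) := by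
      apply exp_le_exp.2
      calc s * L x ≤ |s * L x| := le_abs_self _
        _ = |s| * |L x| := abs_mul _ _
        _ ≤ δ / 2 * |L x| := by gcongr
    -- Half of the exponent `δ` is kept in reserve to absorb the factor `|L x|`.
    have e2 : |L x| ≤ 2 / δ * exp (δ / 2 * |L x|) := by
      have h : δ / 2 * |L x| ≤ exp (δ / 2 * |L x|) := by
        linarith [add_one_le_exp (δ / 2 * |L x|)]
      calc |L x| = 2 / δ * (δ / 2 * |L x|) := by field_simp
        _ ≤ _ := by gcongr
    have e3 : exp (δ * |L x|) ≤ exp (δ * L x) + exp (-δ * L x) := by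
      rcases abs_cases (L x) with ⟨h, _⟩ | ⟨h, _⟩ <;> rw [h]
      · linarith [exp_pos (-δ * L x)]
      · have : δ * -L x = -δ * L x := by ring
        rw [this]
        linarith [exp_pos (δ * L x)]
    rw [norm_mul, norm_mul, norm_eq_abs, norm_eq_abs, norm_eq_abs, abs_of_nonneg (hf0 x), abs_exp]
    calc f x * (exp (s * L x) * |L x|)
        ≤ f x * (exp (δ / 2 * |L x|) * (2 / δ * exp (δ / 2 * |L x|))) := by
          have := hf0 x
          gcongr
      _ = 2 / δ * (f x * exp (δ * |L x|)) := by
          have : exp (δ * |L x|) = exp (δ / 2 * |L x|) * exp (δ / 2 * |L x|) := by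
            rw [← exp_add]; ring_nf
          rw [this]; ring
      _ ≤ 2 / δ * (f x * (exp (δ * L x) + exp (-δ * L x))) := by
          have := hf0 x
          gcongr
      _ = _ := by ring

/-- **`LPD_γ → KLD` as `γ → −1`.**
Let `g, f` be pmfs on `ℕ` with `g x > 0` whenever `f x > 0`, and suppose for some
`δ > 0` both `∑ₓ f(x)(f(x)/g(x))^δ` and `∑ₓ f(x)(f(x)/g(x))^{−δ}` are finite.
Then `LPD_γ(g,f) = (1/(γ(γ+1))) log ∑ₓ g(x)^{1+γ} f(x)^{−γ}` tends, as `γ → −1`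
(through values `γ ∉ {0, −1}`), to the Kullback–Leibler divergence
`KLD(g,f) = ∑ₓ f(x) log(f(x)/g(x))`. -/
theorem lpd_tendsto_kld
    (g f : ℕ → ℝ) (hg0 : ∀ x, 0 ≤ g x) (hf0 : ∀ x, 0 ≤ f x)
    (hg1 : HasSum g 1) (hf1 : HasSum f 1)
    (hsupp : ∀ x, f x ≠ 0 → 0 < g x)
    (δ : ℝ) (hδ : 0 < δ)
    (h1 : Summable fun x => f x * (f x / g x) ^ δ)
    (h2 : Summable fun x => f x * (f x / g x) ^ (-δ)) :
    Tendsto (fun γ : ℝ =>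
        (1 / (γ * (γ + 1))) * Real.log (∑' x, g x ^ (1 + γ) * f x ^ (-γ)))
      (𝓝[≠] (-1:ℝ)) (𝓝 (∑' x, f x * Real.log (f x / g x))) := by
  have hexp : ∀ t : ℝ, ∀ x, f x * (f x / g x) ^ t = f x * exp (t * log (f x / g x)) := by
    intro t x
    by_cases hx : f x = 0
    · simp [hx]
    · have hfx : 0 < f x := lt_of_le_of_ne (hf0 x) (Ne.symm hx)
      rw [rpow_def_of_pos (div_pos hfx (hsupp x hx)), mul_comm t]
  have hM := hasDerivAt_tsum_mul_exp_zero f (fun x => log (f x / g x)) hf0 hf1.summable δ hδ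
    (h1.congr (hexp δ)) (h2.congr (hexp (-δ)))
  have hlog := hM.log (by simp [hf1.tsum_eq])
  have hslope := hasDerivAt_iff_tendsto_slope.1 hlog
  simp only [zero_mul, exp_zero, mul_one, hf1.tsum_eq, div_one] at hslope
  have hs : Tendsto (fun γ : ℝ => -(1 + γ)) (𝓝[≠] (-1)) (𝓝[≠] 0) := by
    refine tendsto_nhdsWithin_iff.2 ⟨?_, ?_⟩
    · have : Continuous fun γ : ℝ => -(1 + γ) := by fun_prop
      simpa using (this.tendsto (-1)).mono_left nhdsWithin_le_nhds
    · filter_upwards [self_mem_nhdsWithin] with γ hγ h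
      exact hγ (by rw [Set.mem_singleton_iff] at h ⊢; linarith)
  have hinv : Tendsto (fun γ : ℝ => (-γ)⁻¹) (𝓝[≠] (-1)) (𝓝 1) := by
    have h : Tendsto (fun γ : ℝ => (-γ)⁻¹) (𝓝 (-1)) (𝓝 (-(-1))⁻¹) :=
      (continuous_neg.tendsto (-1 : ℝ)).inv₀ (by norm_num)
    simpa using h.mono_left nhdsWithin_le_nhds
  have hlim := hinv.mul (hslope.comp hs)
  rw [one_mul] at hlim
  refine hlim.congr' ?_
  filter_upwards [self_mem_nhdsWithin,
    nhdsWithin_le_nhds (eventually_ne_nhds (show (-1 : ℝ) ≠ 0 by norm_num))] with γ hγ hγ0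
  have hsum : ∀ x, g x ^ (1 + γ) * f x ^ (-γ) =
      f x * exp (-(1 + γ) * log (f x / g x)) := by
    intro x
    by_cases hx : f x = 0
    · simp [hx, zero_rpow (neg_ne_zero.2 hγ0)]
    · have hfx : 0 < f x := lt_of_le_of_ne (hf0 x) (Ne.symm hx)
      have hgx := hsupp x hx
      rw [rpow_def_of_pos hgx, rpow_def_of_pos hfx, log_div hfx.ne' hgx.ne', ← exp_add]
      nth_rewrite 2 [← exp_log hfx]
      rw [← exp_add]
      ring_nf
  have hγ1 : γ + 1 ≠ 0 := fun h => hγ (by rw [Set.mem_singleton_iff]; linarith)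
  have hγ1' : 1 + γ ≠ 0 := by rwa [add_comm]
  simp only [Function.comp_apply, slope_def_field, hsum, zero_mul, exp_zero, mul_one,
    hf1.tsum_eq, log_one, sub_zero]
  rw [div_eq_mul_inv, add_comm γ 1]
  field_simp
end

section
/- Let β > 0, γ ∈ ℝ with A = 1+γ(1−β) ≠ 0 and B = β−γ(1−β) ≠ 0, let g be a probability mass function on ℕ, and let {f_θ : θ ∈ Θ ⊆ ℝ^p} be a family of probability mass functions on ℕ, differentiable in θ, for which all the sums below converge and differentiation may be interchanged with summation. Then the gradient in θ of LSD_{β,γ}(g, f_θ) equals ((1+β)/A) · [ (Σ_x f_θ(x)^{1+β} u_θ(x)) / (Σ_x f_θ(x)^{1+β}) − (Σ_x f_θ(x)^B g(x)^A u_θ(x)) / (Σ_x f_θ(x)^B g(x)^A) ], where u_θ(x) = ∇_θ log f_θ(x); hence any interior minimizer θ of LSD_{β,γ}(g, f_θ) satisfies the estimating equation (Σ_x f_θ^{1+β} u_θ)/(Σ_x f_θ^{1+β}) = (Σ_x f_θ^B g^A u_θ)/(Σ_x f_θ^B g^A). -/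
/-!
Along a coordinate line, the third term of the LSD is constant, and the first two are multiples of
logarithms of positive sums whose derivatives are given by the interchange hypotheses `hint1` and
`hint2`. The chain rule for `log` gives the factors `(1 + β) / A` and
`((1 + β) / (A * B)) * B = (1 + β) / A`, hence the gradient formula. At a minimizer every partial
derivative vanishes (Fermat, `IsLocalMin.hasDerivAt_eq_zero`), and the nonzero prefactor
`(1 + β) / A` cancels.
-/

open MeasureTheory Filter Real Topology

/-- The logarithmic super divergence `LSD_{β,γ}(g, f_θ)` for a discrete model
`{f θ : θ ∈ ℝ^p}` of pmfs on `ℕ`, expressed through `A = 1 + γ(1−β)` and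
`B = β − γ(1−β)`. -/
noncomputable def lsdOf (p : ℕ) (f : (Fin p → ℝ) → ℕ → ℝ) (g : ℕ → ℝ)
    (β A B : ℝ) (θ : Fin p → ℝ) : ℝ :=
  (1 / A) * Real.log (∑' x, f θ x ^ (1 + β))
    - ((1 + β) / (A * B)) * Real.log (∑' x, f θ x ^ B * g x ^ A)
    + (1 / B) * Real.log (∑' x, g x ^ (1 + β))

/-- **Gradient of the LSD and the estimating equation.**
Assume all the written sums are summable (with positive totals), each `f θ x` is
differentiable in `θ` with score `u θ x = ∇_θ log f θ x`, and that differentiation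
may be interchanged with summation for the two `θ`-dependent sums.  Then each
partial derivative of `θ ↦ LSD_{β,γ}(g, f_θ)` is
`((1+β)/A) [ (∑ₓ f_θ^{1+β} u_θ)/(∑ₓ f_θ^{1+β}) − (∑ₓ f_θ^B g^A u_θ)/(∑ₓ f_θ^B g^A) ]`,
and consequently any global minimizer `θ` of `LSD_{β,γ}(g, f_θ)` satisfies the
estimating equation
`(∑ₓ f_θ^{1+β} u_θ)/(∑ₓ f_θ^{1+β}) = (∑ₓ f_θ^B g^A u_θ)/(∑ₓ f_θ^B g^A)`. -/
theorem lsd_gradient_and_estimating_equation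
    (p : ℕ) (g : ℕ → ℝ) (hg0 : ∀ x, 0 ≤ g x) (hg1 : HasSum g 1)
    (f : (Fin p → ℝ) → ℕ → ℝ) (hfpos : ∀ θ x, 0 < f θ x) (hf1 : ∀ θ, HasSum (f θ) 1)
    (β γ : ℝ) (hβ : 0 < β)
    (A B : ℝ) (hA : A = 1 + γ * (1 - β)) (hB : B = β - γ * (1 - β))
    (hA0 : A ≠ 0) (hB0 : B ≠ 0)
    (u : (Fin p → ℝ) → ℕ → Fin p → ℝ)
    (hu : ∀ θ x j, HasDerivAt (fun t : ℝ => f (θ + t • (Pi.single j 1 : Fin p → ℝ)) x)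
      (f θ x * u θ x j) 0)
    (hsum1 : ∀ θ, Summable fun x => f θ x ^ (1 + β))
    (hsum2 : ∀ θ, Summable fun x => f θ x ^ B * g x ^ A)
    (hpos2 : ∀ θ, 0 < ∑' x, f θ x ^ B * g x ^ A)
    (hsum1' : ∀ θ j, Summable fun x => f θ x ^ (1 + β) * u θ x j)
    (hsum2' : ∀ θ j, Summable fun x => f θ x ^ B * g x ^ A * u θ x j)
    (hint1 : ∀ θ j, HasDerivAt
      (fun t : ℝ => ∑' x, f (θ + t • (Pi.single j 1 : Fin p → ℝ)) x ^ (1 + β))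
      ((1 + β) * ∑' x, f θ x ^ (1 + β) * u θ x j) 0)
    (hint2 : ∀ θ j, HasDerivAt
      (fun t : ℝ => ∑' x, f (θ + t • (Pi.single j 1 : Fin p → ℝ)) x ^ B * g x ^ A)
      (B * ∑' x, f θ x ^ B * g x ^ A * u θ x j) 0) :
    (∀ θ j, HasDerivAt
        (fun t : ℝ => lsdOf p f g β A B (θ + t • (Pi.single j 1 : Fin p → ℝ)))
        (((1 + β) / A) *
          ((∑' x, f θ x ^ (1 + β) * u θ x j) / (∑' x, f θ x ^ (1 + β))
            - (∑' x, f θ x ^ B * g x ^ A * u θ x j) / (∑' x, f θ x ^ B * g x ^ A))) 0)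
    ∧ (∀ θmin : Fin p → ℝ,
        (∀ θ, lsdOf p f g β A B θmin ≤ lsdOf p f g β A B θ) → ∀ j,
        (∑' x, f θmin x ^ (1 + β) * u θmin x j) / (∑' x, f θmin x ^ (1 + β)) =
        (∑' x, f θmin x ^ B * g x ^ A * u θmin x j) /
          (∑' x, f θmin x ^ B * g x ^ A)) := by
  have key : ∀ θ j, HasDerivAt
      (fun t : ℝ => lsdOf p f g β A B (θ + t • (Pi.single j 1 : Fin p → ℝ)))
      (((1 + β) / A) *
        ((∑' x, f θ x ^ (1 + β) * u θ x j) / (∑' x, f θ x ^ (1 + β))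
          - (∑' x, f θ x ^ B * g x ^ A * u θ x j) / (∑' x, f θ x ^ B * g x ^ A))) 0 := by
    intro θ j
    have hpos1 : 0 < ∑' x, f θ x ^ (1 + β) :=
      (hsum1 θ).tsum_pos (fun x => (rpow_pos_of_pos (hfpos θ x) _).le) 0
        (rpow_pos_of_pos (hfpos θ 0) _)
    have h1 := (hint1 θ j).log (by simpa using hpos1.ne')
    have h2 := (hint2 θ j).log (by simpa using (hpos2 θ).ne')
    have h := ((h1.const_mul (1 / A)).sub (h2.const_mul ((1 + β) / (A * B)))).add_const
      ((1 / B) * Real.log (∑' x, g x ^ (1 + β)))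
    refine h.congr_deriv ?_
    simp only [zero_smul, add_zero]
    have := hpos1.ne'
    have := (hpos2 θ).ne'
    field_simp
  refine ⟨key, fun θ hmin j => ?_⟩
  -- The minimum over all `θ` restricts to a minimum at `t = 0` of each coordinate line.
  have hloc : IsLocalMin
      (fun t : ℝ => lsdOf p f g β A B (θ + t • (Pi.single j 1 : Fin p → ℝ))) 0 :=
    Filter.Eventually.of_forall fun t => by simpa using hmin _
  exact sub_eq_zero.mp ((mul_eq_zero.mp (hloc.hasDerivAt_eq_zero (key θ j))).resolve_left
    (div_ne_zero (by linarith) hA0))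
end

section
/- Let {f_θ} be twice continuously differentiable in θ with all relevant sums convergent and differentiation interchangeable with summation. Then the second-order partial derivatives ∇_{ij} LSD_{β,γ}(f_θ, f_{θ₀}) evaluated at θ = θ₀ do not depend on the parameter γ: for any γ, γ' ∈ ℝ (with the corresponding A, B nonzero), ∇_{ij} LSD_{β,γ}(f_θ, f_{θ₀})|_{θ=θ₀} = ∇_{ij} LSD_{β,γ'}(f_θ, f_{θ₀})|_{θ=θ₀} for all i, j. Moreover LSD_{β,γ}(f_{θ₀}, f_{θ₀}) = 0 and ∇_i LSD_{β,γ}(f_θ, f_{θ₀})|_{θ=θ₀} = 0 for all i. -/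
/-! Write `S = ∑ f_{θ₀}^{1+β}` and `T a = ∑ f_{θ₀}^{1+β} (a U_k U_j + ∂_k U_j)`.  Differentiating
the logarithms twice at `θ₀`, where both `∑ f_{θ₀}^B f_θ^A` and `∑ f_θ^{1+β}` equal `S`, gives
`((1 + β) / B) (T (1 + β) - T A) / S` minus a term in which `γ` has cancelled because `A + B = 1 + β`.
If `∑ f_{θ₀}^{1+β} U_k U_j` converges, the difference `T (1 + β) - T A` is
`B ∑ f_{θ₀}^{1+β} U_k U_j` when `∑ f_{θ₀}^{1+β} ∂_k U_j` converges too, and it is `0` (both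
unconditional sums take the default value `0`) when it does not; either way `γ` drops out.

The convergence of `∑ f_{θ₀}^{1+β} U_j ^ 2`, hence of the mixed sum, is not an explicit hypothesis;
it follows from the two-fold differentiability of the sums (`summable_sq_of_twice_diff`).
With `c = 1 + β`, the function `s ↦ (c - A) ((e^{cs} - 1) / c - (e^{As} - 1) / A)` is nonnegative,
vanishes at `0` and has second derivative `(c - A) ^ 2 = B ^ 2` there.  Evaluated at
`s = log (f_θ / f_{θ₀})` and weighted by `f_{θ₀}^{1+β}`, its full sum along a coordinate line is a
combination of the given sums, and it dominates each finite partial sum with equality at `θ₀`.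
The second-order condition at that minimum bounds every partial sum of `B ^ 2 f_{θ₀}^{1+β} U_j ^ 2`. -/

open Filter Real Topology

/-- `LSD_{β,γ}(f_θ, f_{θ₀})` as a function of `θ` (the first, "data density" slot),
with `A = 1 + γ(1−β)`, `B = β − γ(1−β)`. -/
noncomputable def lsdTheta (p : ℕ) (f : (Fin p → ℝ) → ℕ → ℝ) (θ₀ : Fin p → ℝ)
    (β A B : ℝ) (θ : Fin p → ℝ) : ℝ :=
  (1 / A) * Real.log (∑' x, f θ₀ x ^ (1 + β))
    - ((1 + β) / (A * B)) * Real.log (∑' x, f θ₀ x ^ B * f θ x ^ A)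
    + (1 / B) * Real.log (∑' x, f θ x ^ (1 + β))

/-- Holds because the slope `(exp y - 1) / y` of `exp` from `0` is monotone, by convexity. -/
lemma exp_gap_nonneg (c A s : ℝ) (hc : c ≠ 0) (hA : A ≠ 0) :
    0 ≤ (c - A) * ((exp (c * s) - 1) / c - (exp (A * s) - 1) / A) := by
  wlog h : A ≤ c generalizing c A
  · have := this A c hA hc (le_of_not_ge h)
    linarith
  refine mul_nonneg (sub_nonneg.2 h) ?_
  rcases eq_or_ne s 0 with rfl | hs
  · simp
  have key : ∀ x y : ℝ, x ≠ 0 → y ≠ 0 → x ≤ y → (exp x - 1) / x ≤ (exp y - 1) / y := by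
    intro x y hx hy hxy
    simpa using convexOn_exp.secant_mono (Set.mem_univ 0) (Set.mem_univ x) (Set.mem_univ y)
      hx hy hxy
  have e : (exp (c * s) - 1) / c - (exp (A * s) - 1) / A
      = s * ((exp (c * s) - 1) / (c * s) - (exp (A * s) - 1) / (A * s)) := by
    field_simp
  rw [e]
  rcases lt_or_gt_of_ne hs with hs' | hs'
  · have := key (c * s) (A * s) (mul_ne_zero hc hs) (mul_ne_zero hA hs) (by nlinarith)
    exact mul_nonneg_of_nonpos_of_nonpos hs'.le (by linarith)
  · have := key (A * s) (c * s) (mul_ne_zero hA hs) (mul_ne_zero hc hs) (by nlinarith)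
    exact mul_nonneg hs'.le (by linarith)

/-- Second-order necessary condition at a global minimum. -/
lemma second_deriv_nonneg (E E1 : ℝ → ℝ) (L : ℝ) (h0 : E 0 = 0) (hE : ∀ h, 0 ≤ E h)
    (h1 : ∀ h, HasDerivAt E (E1 h) h) (h2 : HasDerivAt E1 L 0) : 0 ≤ L := by
  by_contra hL
  push Not at hL
  have hmin : IsLocalMin E 0 := Eventually.of_forall fun h => by rw [h0]; exact hE h
  have hd : deriv E = E1 := funext fun h => (h1 h).deriv
  have hmax : IsLocalMax E 0 := by
    refine isLocalMax_of_deriv_deriv_neg ?_ ?_ (h1 0).continuousAt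
    · rw [hd, h2.deriv]; exact hL
    · rw [hd]; exact hmin.hasDerivAt_eq_zero (h1 0)
  -- `E` is both locally minimal and maximal at `0`, hence locally zero, so `L = 0`
  have hz : E =ᶠ[𝓝 0] fun _ => (0 : ℝ) := by
    filter_upwards [hmax] with h hh
    exact le_antisymm (hh.trans h0.le) (hE h)
  have hz1 : E1 =ᶠ[𝓝 0] fun _ => (0 : ℝ) := by
    have := hz.deriv
    rw [hd] at this
    simpa using this
  have : L = 0 := h2.unique ((hasDerivAt_const (0 : ℝ) (0 : ℝ)).congr_of_eventuallyEq hz1)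
  linarith

/-- One-dimensional form of the convergence of `∑ f_{θ₀}^{1+β} U_j ^ 2`: `P` is the weight, `l t` is
the log-likelihood ratio at parameter `t`, `u t` is its derivative and `v` the derivative of `u` at
`0`.  Twice differentiability of the tilted sums for two distinct exponents suffices. -/
lemma summable_sq_of_twice_diff (P : ℕ → ℝ) (l u : ℝ → ℕ → ℝ) (v : ℕ → ℝ) (c A Lc LA : ℝ)
    (hc : c ≠ 0) (hA : A ≠ 0) (hcA : c ≠ A) (hP : ∀ x, 0 ≤ P x) (hl0 : ∀ x, l 0 x = 0)
    (hl : ∀ x h, HasDerivAt (fun t => l t x) (u h x) h)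
    (hu : ∀ x, HasDerivAt (fun t => u t x) (v x) 0)
    (hsc : ∀ h, Summable fun x => P x * exp (c * l h x))
    (hsA : ∀ h, Summable fun x => P x * exp (A * l h x))
    (hc1 : ∀ h, HasDerivAt (fun t => ∑' x, P x * exp (c * l t x))
      (c * ∑' x, P x * exp (c * l h x) * u h x) h)
    (hA1 : ∀ h, HasDerivAt (fun t => ∑' x, P x * exp (A * l t x))
      (A * ∑' x, P x * exp (A * l h x) * u h x) h)
    (hc2 : HasDerivAt (fun t => c * ∑' x, P x * exp (c * l t x) * u t x) Lc 0)
    (hA2 : HasDerivAt (fun t => A * ∑' x, P x * exp (A * l t x) * u t x) LA 0) :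
    Summable fun x => P x * u 0 x ^ 2 := by
  have hB : c - A ≠ 0 := sub_ne_zero.2 hcA
  have hsP : Summable P := by simpa [hl0] using hsc 0
  set k : ℝ → ℕ → ℝ := fun h x =>
    P x * ((c - A) * ((exp (c * l h x) - 1) / c - (exp (A * l h x) - 1) / A)) with hk
  set D : ℝ → ℝ := fun h => (c - A) * (((∑' x, P x * exp (c * l h x)) - ∑' x, P x) / c
    - ((∑' x, P x * exp (A * l h x)) - ∑' x, P x) / A) with hD
  have hkD : ∀ h, HasSum (k h) (D h) := by
    intro h
    have := (((((hsc h).hasSum.sub hsP.hasSum).div_const c)).sub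
      (((hsA h).hasSum.sub hsP.hasSum).div_const A)).mul_left (c - A)
    refine this.congr_fun ?_
    intro x
    simp only [hk]
    ring
  have hk0 : ∀ h x, 0 ≤ k h x := fun h x => mul_nonneg (hP x) (exp_gap_nonneg c A _ hc hA)
  have bound : ∀ F : Finset ℕ, ∑ x ∈ F, (c - A) ^ 2 * (P x * u 0 x ^ 2)
      ≤ (c - A) * (Lc / c - LA / A) := by
    intro F
    have hexp : ∀ (a : ℝ) x h, HasDerivAt (fun t => exp (a * l t x))
        (exp (a * l h x) * (a * u h x)) h := fun a x h => ((hl x h).const_mul a).exp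
    have hkder : ∀ x h, HasDerivAt (fun t => k t x)
        (P x * ((c - A) * (exp (c * l h x) * u h x - exp (A * l h x) * u h x))) h := by
      intro x h
      have := (((((hexp c x h).sub_const 1).div_const c).sub
        (((hexp A x h).sub_const 1).div_const A)).const_mul (c - A)).const_mul (P x)
      refine HasDerivAt.congr_deriv this ?_
      field_simp
    have hkder2 : ∀ x, HasDerivAt (fun t => P x * ((c - A) *
        (exp (c * l t x) * u t x - exp (A * l t x) * u t x)))
        ((c - A) ^ 2 * (P x * u 0 x ^ 2)) 0 := by
      intro x
      have := ((((hexp c x 0).mul (hu x)).sub ((hexp A x 0).mul (hu x))).const_mul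
        (c - A)).const_mul (P x)
      refine HasDerivAt.congr_deriv this ?_
      simp only [hl0, mul_zero, exp_zero]
      ring
    have hD1 : ∀ h, HasDerivAt D ((c - A) * ((c * ∑' x, P x * exp (c * l h x) * u h x) / c
        - (A * ∑' x, P x * exp (A * l h x) * u h x) / A)) h := fun h =>
      ((((hc1 h).sub_const _).div_const c).sub (((hA1 h).sub_const _).div_const A)).const_mul _
    have hD2 := ((hc2.div_const c).sub (hA2.div_const A)).const_mul (c - A)
    have := second_deriv_nonneg (fun h => D h - ∑ x ∈ F, k h x) _ _ ?_ ?_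
      (fun h => (hD1 h).sub (HasDerivAt.fun_sum fun x _ => hkder x h))
      (hD2.sub (HasDerivAt.fun_sum fun x _ => hkder2 x))
    · linarith
    · simp [hD, hk, hl0]
    · intro h
      have := sum_le_hasSum F (fun x _ => hk0 h x) (hkD h)
      simpa using this
  have := summable_of_sum_le (fun x => by have := hP x; positivity) bound
  exact (summable_mul_left_iff (pow_ne_zero 2 hB)).1 this

/-- With `T a = ∑ (a q + r)`, the difference `T c - T a` is `c - a` times a quantity independent of `a` and `c`, even if the sum of `r`
diverges, since then `T` vanishes identically. -/
lemma tsum_affine_sub (q r : ℕ → ℝ) (hq : Summable q) (a c : ℝ) :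
    (∑' x, (c * q x + r x)) - ∑' x, (a * q x + r x)
      = (c - a) * (open Classical in if Summable r then ∑' x, q x else 0) := by
  split_ifs with hr
  · rw [(hq.mul_left c).tsum_add hr, (hq.mul_left a).tsum_add hr, tsum_mul_left, tsum_mul_left]
    ring
  · have h : ∀ a : ℝ, ¬ Summable fun x => a * q x + r x := fun a h => hr <| by
      simpa using h.sub (hq.mul_left a)
    rw [tsum_eq_zero_of_not_summable (h a), tsum_eq_zero_of_not_summable (h c)]
    simp

/-- The statement for a single exponent pair `(A, B)`; the right-hand side of the last conclusion
involves neither `A` nor `B`.  It is `(1 + β)` times the (possibly degenerate) covariance-type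
expression `(∑ P U_k U_j) / S - (∑ P U_k) (∑ P U_j) / S ^ 2` with `P = f_{θ₀}^{1+β}`. -/
lemma lsd_hessian_formula
    (p : ℕ) (f : (Fin p → ℝ) → ℕ → ℝ) (hfpos : ∀ θ x, 0 < f θ x)
    (β : ℝ) (hβ : 0 < β) (θ₀ : Fin p → ℝ)
    (U : (Fin p → ℝ) → ℕ → Fin p → ℝ)
    (U2' : (Fin p → ℝ) → ℕ → Fin p → Fin p → ℝ)
    (hU : ∀ θ x j, HasDerivAt
      (fun t : ℝ => Real.log (f (θ + t • (Pi.single j 1 : Fin p → ℝ)) x)) (U θ x j) 0)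
    (hU2 : ∀ θ x j k, HasDerivAt
      (fun t : ℝ => U (θ + t • (Pi.single k 1 : Fin p → ℝ)) x j) (U2' θ x j k) 0)
    (A B : ℝ) (hAB : A + B = 1 + β) (hA0 : A ≠ 0) (hB0 : B ≠ 0)
    (hsum : ∀ θ, Summable fun x => f θ₀ x ^ B * f θ x ^ A)
    (hpos : ∀ θ, 0 < ∑' x, f θ₀ x ^ B * f θ x ^ A)
    (hpos3 : ∀ θ, 0 < ∑' x, f θ x ^ (1 + β))
    (hint1 : ∀ θ j, HasDerivAt
      (fun t : ℝ => ∑' x, f θ₀ x ^ B * f (θ + t • (Pi.single j 1 : Fin p → ℝ)) x ^ A)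
      (A * ∑' x, f θ₀ x ^ B * f θ x ^ A * U θ x j) 0)
    (hint2 : ∀ θ j k, HasDerivAt
      (fun t : ℝ => A * ∑' x, f θ₀ x ^ B *
        f (θ + t • (Pi.single k 1 : Fin p → ℝ)) x ^ A *
        U (θ + t • (Pi.single k 1 : Fin p → ℝ)) x j)
      (A * ∑' x, f θ₀ x ^ B * f θ x ^ A * (A * U θ x k * U θ x j + U2' θ x j k)) 0)
    (hint3 : ∀ θ j, HasDerivAt
      (fun t : ℝ => ∑' x, f (θ + t • (Pi.single j 1 : Fin p → ℝ)) x ^ (1 + β))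
      ((1 + β) * ∑' x, f θ x ^ (1 + β) * U θ x j) 0)
    (hint4 : ∀ θ j k, HasDerivAt
      (fun t : ℝ => (1 + β) * ∑' x,
        f (θ + t • (Pi.single k 1 : Fin p → ℝ)) x ^ (1 + β) *
        U (θ + t • (Pi.single k 1 : Fin p → ℝ)) x j)
      ((1 + β) * ∑' x, f θ x ^ (1 + β) *
        ((1 + β) * U θ x k * U θ x j + U2' θ x j k)) 0) :
    lsdTheta p f θ₀ β A B θ₀ = 0 ∧
    (∀ j : Fin p, deriv
      (fun t : ℝ => lsdTheta p f θ₀ β A B (θ₀ + t • (Pi.single j 1 : Fin p → ℝ))) 0 = 0) ∧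
    (∀ j k : Fin p,
      deriv (fun s : ℝ => deriv (fun t : ℝ =>
        lsdTheta p f θ₀ β A B
          (θ₀ + s • (Pi.single k 1 : Fin p → ℝ) + t • (Pi.single j 1 : Fin p → ℝ))) 0) 0 =
      (1 + β) * ((open Classical in if Summable fun x => f θ₀ x ^ (1 + β) * U2' θ₀ x j k then
          ∑' x, f θ₀ x ^ (1 + β) * (U θ₀ x k * U θ₀ x j) else 0) / (∑' x, f θ₀ x ^ (1 + β))
        - (∑' x, f θ₀ x ^ (1 + β) * U θ₀ x k) * (∑' x, f θ₀ x ^ (1 + β) * U θ₀ x j)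
          / (∑' x, f θ₀ x ^ (1 + β)) ^ 2)) := by
  have hc0 : (1 + β) ≠ 0 := by positivity
  have hPP : ∀ x, f θ₀ x ^ B * f θ₀ x ^ A = f θ₀ x ^ (1 + β) := fun x => by
    rw [← rpow_add (hfpos _ _), add_comm, hAB]
  have hS := hpos3 θ₀
  have hA1 : ∀ θ : Fin p → ℝ, ∀ j, HasDerivAt
      (fun t : ℝ => lsdTheta p f θ₀ β A B (θ + t • (Pi.single j 1 : Fin p → ℝ)))
      (-((1 + β) / (A * B)) * ((A * ∑' x, f θ₀ x ^ B * f θ x ^ A * U θ x j)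
          / ∑' x, f θ₀ x ^ B * f θ x ^ A)
        + 1 / B * (((1 + β) * ∑' x, f θ x ^ (1 + β) * U θ x j) / ∑' x, f θ x ^ (1 + β))) 0 := by
    intro θ j
    have h1 := (hint1 θ j).log (by simpa using (hpos θ).ne')
    have h3 := (hint3 θ j).log (by simpa using (hpos3 θ).ne')
    have := ((h1.const_mul ((1 + β) / (A * B))).const_sub
      ((1 / A) * Real.log (∑' x, f θ₀ x ^ (1 + β)))).add (h3.const_mul (1 / B))
    simp only [zero_smul, add_zero, neg_mul] at this ⊢
    exact this
  refine ⟨?_, ?_, ?_⟩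
  · simp only [lsdTheta, hPP]
    rw [← hAB]
    field_simp
    ring
  · intro j
    rw [(hA1 θ₀ j).deriv]
    simp only [hPP]
    field_simp
    ring
  · intro j k
    -- passage from derivatives at `0` based at a shifted point to derivatives along a fixed line
    have shift : ∀ (g : (Fin p → ℝ) → ℝ) (g' : (Fin p → ℝ) → ℝ) (e : Fin p → ℝ),
        (∀ θ, HasDerivAt (fun t : ℝ => g (θ + t • e)) (g' θ) 0) →
        ∀ h : ℝ, HasDerivAt (fun t : ℝ => g (θ₀ + t • e)) (g' (θ₀ + h • e)) h := by
      intro g g' e H h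
      have := HasDerivAt.comp_sub_const h h (by simpa using H (θ₀ + h • e))
      refine this.congr_of_eventuallyEq (Eventually.of_forall fun t => ?_)
      simp only [sub_smul]
      congr 1
      abel
    have sq : ∀ j, Summable fun x => f θ₀ x ^ (1 + β) * U θ₀ x j ^ 2 := by
      intro j
      set e : Fin p → ℝ := Pi.single j 1 with he
      have ec : ∀ θ x, f θ x ^ (1 + β)
          = f θ₀ x ^ (1 + β) * exp ((1 + β) * (log (f θ x) - log (f θ₀ x))) := by
        intro θ x
        rw [rpow_def_of_pos (hfpos _ _), rpow_def_of_pos (hfpos _ _), ← exp_add]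
        ring_nf
      have eA : ∀ θ x, f θ₀ x ^ B * f θ x ^ A
          = f θ₀ x ^ (1 + β) * exp (A * (log (f θ x) - log (f θ₀ x))) := by
        intro θ x
        rw [rpow_def_of_pos (hfpos _ _), rpow_def_of_pos (hfpos _ _),
          rpow_def_of_pos (hfpos _ _), ← exp_add, ← exp_add, ← hAB]
        ring_nf
      have := summable_sq_of_twice_diff (fun x => f θ₀ x ^ (1 + β))
        (fun t x => log (f (θ₀ + t • e) x) - log (f θ₀ x))
        (fun t x => U (θ₀ + t • e) x j) (fun x => U2' θ₀ x j j) (1 + β) A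
        ((1 + β) * ∑' x, f θ₀ x ^ (1 + β) * ((1 + β) * U θ₀ x j * U θ₀ x j + U2' θ₀ x j j))
        (A * ∑' x, f θ₀ x ^ B * f θ₀ x ^ A * (A * U θ₀ x j * U θ₀ x j + U2' θ₀ x j j))
        hc0 hA0 (fun h => hB0 (by linarith)) (fun x => (rpow_pos_of_pos (hfpos _ _) _).le)
        (by simp)
        (fun x h => (shift (fun θ => log (f θ x)) (fun θ => U θ x j) e
          (fun θ => hU θ x j) h).sub_const _)
        (fun x => hU2 θ₀ x j j)
        (fun h => ?_) (fun h => ?_) (fun h => ?_) (fun h => ?_) ?_ ?_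
      · simpa using this
      · simp only [← ec]
        -- a nonzero unconditional sum converges
        by_contra hn
        exact (hpos3 (θ₀ + h • e)).ne' (tsum_eq_zero_of_not_summable hn)
      · simp only [← eA]; exact hsum _
      · simp only [← ec]
        exact shift (fun θ => ∑' x, f θ x ^ (1 + β))
          (fun θ => (1 + β) * ∑' x, f θ x ^ (1 + β) * U θ x j) e (fun θ => hint3 θ j) h
      · simp only [← eA]
        exact shift (fun θ => ∑' x, f θ₀ x ^ B * f θ x ^ A)
          (fun θ => A * ∑' x, f θ₀ x ^ B * f θ x ^ A * U θ x j) e (fun θ => hint1 θ j) h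
      · simp only [← ec]; exact hint4 θ₀ j j
      · simp only [← eA]; exact hint2 θ₀ j j
    have hq : Summable fun x => f θ₀ x ^ (1 + β) * (U θ₀ x k * U θ₀ x j) := by
      refine Summable.of_norm_bounded ((sq k).add (sq j)) fun x => ?_
      have hP := (rpow_pos_of_pos (hfpos θ₀ x) (1 + β)).le
      rw [norm_mul, norm_of_nonneg hP, ← mul_add]
      refine mul_le_mul_of_nonneg_left ?_ hP
      rw [norm_eq_abs, abs_le]
      constructor <;> nlinarith [sq_nonneg (U θ₀ x k + U θ₀ x j), sq_nonneg (U θ₀ x k - U θ₀ x j)]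
    have hT := tsum_affine_sub _ (fun x => f θ₀ x ^ (1 + β) * U2' θ₀ x j k) hq A (1 + β)
    have hform : ∀ a : ℝ, (fun x => f θ₀ x ^ (1 + β) * (a * U θ₀ x k * U θ₀ x j + U2' θ₀ x j k))
        = fun x => a * (f θ₀ x ^ (1 + β) * (U θ₀ x k * U θ₀ x j))
          + f θ₀ x ^ (1 + β) * U2' θ₀ x j k := fun a => funext fun x => by ring
    rw [← hform, ← hform] at hT
    simp only [(hA1 _ j).deriv]
    have h2 := hint2 θ₀ j k
    have h1 := hint1 θ₀ k
    have h3 := hint3 θ₀ k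
    have h4 := hint4 θ₀ j k
    have := ((h2.div h1 (by simpa using (hpos θ₀).ne')).const_mul (-((1 + β) / (A * B)))).add
      ((h4.div h3 (by simpa using (hpos3 θ₀).ne')).const_mul (1 / B))
    refine (HasDerivAt.deriv this).trans ?_
    simp only [zero_smul, add_zero, hPP]
    rw [eq_add_of_sub_eq hT]
    have hB : B = 1 + β - A := by linarith
    subst hB
    generalize (∑' x, f θ₀ x ^ (1 + β)) = S at *
    field_simp
    ring


/-- **The second derivatives of `θ ↦ LSD_{β,γ}(f_θ, f_{θ₀})` at `θ₀` do not depend on `γ`.**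
Let `{f θ}` be a twice continuously differentiable family of pmfs on `ℕ` with score
`U θ x j = ∂_j log f θ x` and second derivatives `U2' θ x j k = ∂_k U θ x j`, with all
relevant sums convergent (positive) and differentiation interchangeable with summation
(hypotheses `hint*`).  For any `γ, γ'` with the corresponding `A, B, A', B'` nonzero:
`LSD_{β,γ}(f_{θ₀}, f_{θ₀}) = 0`, all first partial derivatives `∇_i LSD_{β,γ}(f_θ,f_{θ₀})`
at `θ = θ₀` vanish, and the second partial derivatives `∇_{ij}` at `θ₀` coincide for
`γ` and `γ'`. -/
theorem lsd_hessian_gamma_free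
    (p : ℕ) (f : (Fin p → ℝ) → ℕ → ℝ)
    (hfpos : ∀ θ x, 0 < f θ x) (hf1 : ∀ θ, HasSum (f θ) 1)
    (β : ℝ) (hβ : 0 < β) (θ₀ : Fin p → ℝ)
    (hsm : ∀ x, ContDiff ℝ 2 fun θ : Fin p → ℝ => f θ x)
    (U : (Fin p → ℝ) → ℕ → Fin p → ℝ)
    (U2' : (Fin p → ℝ) → ℕ → Fin p → Fin p → ℝ)
    (hU : ∀ θ x j, HasDerivAt
      (fun t : ℝ => Real.log (f (θ + t • (Pi.single j 1 : Fin p → ℝ)) x)) (U θ x j) 0)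
    (hU2 : ∀ θ x j k, HasDerivAt
      (fun t : ℝ => U (θ + t • (Pi.single k 1 : Fin p → ℝ)) x j) (U2' θ x j k) 0)
    (γ γ' : ℝ)
    (A B A' B' : ℝ)
    (hA : A = 1 + γ * (1 - β)) (hB : B = β - γ * (1 - β))
    (hA' : A' = 1 + γ' * (1 - β)) (hB' : B' = β - γ' * (1 - β))
    (hA0 : A ≠ 0) (hB0 : B ≠ 0) (hA0' : A' ≠ 0) (hB0' : B' ≠ 0)
    -- summability and positivity of the relevant sums
    (hsum : ∀ a b : ℝ, (a = A ∧ b = B) ∨ (a = A' ∧ b = B') → ∀ θ,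
      Summable fun x => f θ₀ x ^ b * f θ x ^ a)
    (hpos : ∀ a b : ℝ, (a = A ∧ b = B) ∨ (a = A' ∧ b = B') → ∀ θ,
      0 < ∑' x, f θ₀ x ^ b * f θ x ^ a)
    (hpos3 : ∀ θ, 0 < ∑' x, f θ x ^ (1 + β))
    -- interchange of differentiation and summation, for both parameter pairs
    (hint1 : ∀ a b : ℝ, (a = A ∧ b = B) ∨ (a = A' ∧ b = B') → ∀ θ j, HasDerivAt
      (fun t : ℝ => ∑' x, f θ₀ x ^ b * f (θ + t • (Pi.single j 1 : Fin p → ℝ)) x ^ a)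
      (a * ∑' x, f θ₀ x ^ b * f θ x ^ a * U θ x j) 0)
    (hint2 : ∀ a b : ℝ, (a = A ∧ b = B) ∨ (a = A' ∧ b = B') → ∀ θ j k, HasDerivAt
      (fun t : ℝ => a * ∑' x, f θ₀ x ^ b *
        f (θ + t • (Pi.single k 1 : Fin p → ℝ)) x ^ a *
        U (θ + t • (Pi.single k 1 : Fin p → ℝ)) x j)
      (a * ∑' x, f θ₀ x ^ b * f θ x ^ a * (a * U θ x k * U θ x j + U2' θ x j k)) 0)
    (hint3 : ∀ θ j, HasDerivAt
      (fun t : ℝ => ∑' x, f (θ + t • (Pi.single j 1 : Fin p → ℝ)) x ^ (1 + β))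
      ((1 + β) * ∑' x, f θ x ^ (1 + β) * U θ x j) 0)
    (hint4 : ∀ θ j k, HasDerivAt
      (fun t : ℝ => (1 + β) * ∑' x,
        f (θ + t • (Pi.single k 1 : Fin p → ℝ)) x ^ (1 + β) *
        U (θ + t • (Pi.single k 1 : Fin p → ℝ)) x j)
      ((1 + β) * ∑' x, f θ x ^ (1 + β) *
        ((1 + β) * U θ x k * U θ x j + U2' θ x j k)) 0) :
    lsdTheta p f θ₀ β A B θ₀ = 0 ∧
    (∀ j : Fin p, deriv
      (fun t : ℝ => lsdTheta p f θ₀ β A B (θ₀ + t • (Pi.single j 1 : Fin p → ℝ))) 0 = 0) ∧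
    (∀ j k : Fin p,
      deriv (fun s : ℝ => deriv (fun t : ℝ =>
        lsdTheta p f θ₀ β A B
          (θ₀ + s • (Pi.single k 1 : Fin p → ℝ) + t • (Pi.single j 1 : Fin p → ℝ))) 0) 0 =
      deriv (fun s : ℝ => deriv (fun t : ℝ =>
        lsdTheta p f θ₀ β A' B'
          (θ₀ + s • (Pi.single k 1 : Fin p → ℝ) + t • (Pi.single j 1 : Fin p → ℝ))) 0) 0) := by
  have h := lsd_hessian_formula p f hfpos β hβ θ₀ U U2' hU hU2 A B (by rw [hA, hB]; ring) hA0 hB0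
    (hsum A B (.inl ⟨rfl, rfl⟩)) (hpos A B (.inl ⟨rfl, rfl⟩)) hpos3
    (hint1 A B (.inl ⟨rfl, rfl⟩)) (hint2 A B (.inl ⟨rfl, rfl⟩)) hint3 hint4
  have h' := lsd_hessian_formula p f hfpos β hβ θ₀ U U2' hU hU2 A' B' (by rw [hA', hB']; ring)
    hA0' hB0' (hsum A' B' (.inr ⟨rfl, rfl⟩)) (hpos A' B' (.inr ⟨rfl, rfl⟩)) hpos3
    (hint1 A' B' (.inr ⟨rfl, rfl⟩)) (hint2 A' B' (.inr ⟨rfl, rfl⟩)) hint3 hint4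
  exact ⟨h.1, h.2.1, fun j k => (h.2.2 j k).trans (h'.2.2 j k).symm⟩
end
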